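/- arXiv:1911.08282 — 2 statements merged into one kernel-verified Lean document; each statement's English description precedes it below -/
import Mathlib

section
/- Let M be a left 𝕆-module with dim_ℝ M < ∞, and let n₁ = dim_ℝ 𝒜(M), n₂ = dim_ℝ 𝒜⁻(M). Then M is isomorphic as a left 𝕆-module to 𝕆^{n₁} ⊕ 𝕆̄^{n₂}; in particular dim_ℝ M = 8(n₁ + n₂). -/
noncomputable section

open scoped Quaternion

/-- The octonions, realized as pairs of quaternions via the Cayley–Dickson construction. -/
def Octo : Type := ℍ[ℝ] × ℍ[ℝ]

namespace Octo

instance : AddCommGroup Octo := inferInstanceAs (AddCommGroup (ℍ[ℝ] × ℍ[ℝ]))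
instance : Module ℝ Octo := inferInstanceAs (Module ℝ (ℍ[ℝ] × ℍ[ℝ]))

/-- Build an octonion from a pair of quaternions. -/
def mk (a b : ℍ[ℝ]) : Octo := (a, b)

/-- First quaternion component. -/
def p1 (x : Octo) : ℍ[ℝ] := (show ℍ[ℝ] × ℍ[ℝ] from x).1

/-- Second quaternion component. -/
def p2 (x : Octo) : ℍ[ℝ] := (show ℍ[ℝ] × ℍ[ℝ] from x).2

/-- Cayley–Dickson multiplication: `(a,b)(c,d) = (ac − d̄b, da + bc̄)`. -/
instance : Mul Octo :=
  ⟨fun x y => mk (p1 x * p1 y - star (p2 y) * p2 x) (p2 y * p1 x + p2 x * star (p1 y))⟩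

instance : One Octo := ⟨mk 1 0⟩

/-- Octonion conjugation: for `x = (a,b)`, `x̄ = (ā, −b)`. -/
def conj (x : Octo) : Octo := mk (star (p1 x)) (-(p2 x))

/-- The octonion associator `[x,y,z] = (xy)z − x(yz)`. -/
def assoc (x y z : Octo) : Octo := x * y * z - x * (y * z)

/-- The octonion commutator `[x,y] = xy − yx`. -/
def comm (x y : Octo) : Octo := x * y - y * x

/-- The canonical embedding of the reals into the octonions. -/
def ofReal (r : ℝ) : Octo := r • (1 : Octo)

end Octo

section OMod

variable {M : Type*} [AddCommGroup M] [Module ℝ M]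
variable {N : Type*} [AddCommGroup N] [Module ℝ N]

/-- `IsOMod sm` says that the scalar multiplication `sm : 𝕆 × M → M` makes the real vector
space `M` a left 𝕆-module: `sm` is ℝ-bilinear, unital, and the left associator is
alternating in its two octonion arguments. -/
structure IsOMod (sm : Octo → M → M) : Prop where
  smul_add : ∀ (p : Octo) (m n : M), sm p (m + n) = sm p m + sm p n
  add_smul : ∀ (p q : Octo) (m : M), sm (p + q) m = sm p m + sm q m
  real_smul : ∀ (r : ℝ) (p : Octo) (m : M), sm (r • p) m = r • sm p m
  smul_real : ∀ (r : ℝ) (p : Octo) (m : M), sm p (r • m) = r • sm p m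
  one_smul : ∀ m : M, sm 1 m = m
  alt : ∀ (p q : Octo) (m : M),
    sm (p * q) m - sm p (sm q m) = -(sm (q * p) m - sm q (sm p m))

/-- The left associator `[p,q,m] = (pq)m − p(qm)`. -/
def oLassoc (sm : Octo → M → M) (p q : Octo) (m : M) : M :=
  sm (p * q) m - sm p (sm q m)

/-- The set `𝒜(M)` of associative elements: `[p,q,m] = 0` for all `p,q ∈ 𝕆`. -/
def assocSet (sm : Octo → M → M) : Set M :=
  {m | ∀ p q : Octo, oLassoc sm p q m = 0}

/-- The set `𝒜⁻(M)` of conjugate associative elements: `(pq)m = q(pm)` for all `p,q ∈ 𝕆`. -/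
def conjAssocSet (sm : Octo → M → M) : Set M :=
  {m | ∀ p q : Octo, sm (p * q) m = sm q (sm p m)}

/-- A homomorphism of left 𝕆-modules: an ℝ-linear map commuting with 𝕆-scalar
multiplication. -/
def IsOHom (sm : Octo → M → M) (sm' : Octo → N → N) (f : M → N) : Prop :=
  IsLinearMap ℝ f ∧ ∀ (p : Octo) (m : M), f (sm p m) = sm' p (f m)

/-- Two left 𝕆-modules are isomorphic if there is a bijective homomorphism between them. -/
def OIso (sm : Octo → M → M) (sm' : Octo → N → N) : Prop :=
  ∃ f : M → N, IsOHom sm sm' f ∧ Function.Bijective f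

/-- A submodule: a real subspace closed under 𝕆-scalar multiplication. -/
structure IsOSubmodule (sm : Octo → M → M) (S : Set M) : Prop where
  zero_mem : (0 : M) ∈ S
  add_mem : ∀ {x y : M}, x ∈ S → y ∈ S → x + y ∈ S
  smul_mem : ∀ (r : ℝ) {x : M}, x ∈ S → r • x ∈ S
  osmul_mem : ∀ (p : Octo) {x : M}, x ∈ S → sm p x ∈ S

/-- `⟨m⟩_𝕆`, the smallest submodule containing `m`, as a set. -/
def genSet (sm : Octo → M → M) (m : M) : Set M :=
  ⋂₀ {S : Set M | IsOSubmodule sm S ∧ m ∈ S}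

/-- An element `m` is cyclic if `⟨m⟩_𝕆 = 𝕆m`. -/
def IsOCyclic (sm : Octo → M → M) (m : M) : Prop :=
  genSet sm m = {x | ∃ p : Octo, x = sm p m}

/-- 𝕆-linear independence of a subset `S ⊆ M`: any finite 𝕆-linear combination of
distinct elements of `S` that vanishes has all coefficients zero. -/
def OLinIndep (sm : Octo → M → M) (S : Set M) : Prop :=
  ∀ (n : ℕ) (s : Fin n → M) (r : Fin n → Octo), Function.Injective s → (∀ i, s i ∈ S) →
    (∑ i, sm (r i) (s i)) = 0 → ∀ i, r i = 0

end OMod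

/-- The canonical left 𝕆-module structure on 𝕆 itself. -/
def oSmul : Octo → Octo → Octo := fun p x => p * x

/-- The left 𝕆-module structure `𝕆̄` on 𝕆: `p ·̂ x = p̄x`. -/
def oBarSmul : Octo → Octo → Octo := fun p x => Octo.conj p * x

/-- The left 𝕆-module structure on `𝕆^{n₁} ⊕ 𝕆̄^{n₂}`. -/
def pairSmul (n₁ n₂ : ℕ) :
    Octo → (Fin n₁ → Octo) × (Fin n₂ → Octo) → (Fin n₁ → Octo) × (Fin n₂ → Octo) :=
  fun p x => (fun i => p * x.1 i, fun i => Octo.conj p * x.2 i)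

set_option linter.unusedSimpArgs false
set_option linter.unusedSectionVars false
set_option linter.unusedTactic false
set_option linter.unreachableTactic false

namespace Octo

theorem ext' {x y : Octo} (h1 : p1 x = p1 y) (h2 : p2 x = p2 y) : x = y := Prod.ext h1 h2

@[simp] theorem p1_add (x y : Octo) : p1 (x + y) = p1 x + p1 y := rfl
@[simp] theorem p2_add (x y : Octo) : p2 (x + y) = p2 x + p2 y := rfl
@[simp] theorem p1_sub (x y : Octo) : p1 (x - y) = p1 x - p1 y := rfl
@[simp] theorem p2_sub (x y : Octo) : p2 (x - y) = p2 x - p2 y := rfl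
@[simp] theorem p1_neg (x : Octo) : p1 (-x) = -p1 x := rfl
@[simp] theorem p2_neg (x : Octo) : p2 (-x) = -p2 x := rfl
@[simp] theorem p1_zero : p1 (0 : Octo) = 0 := rfl
@[simp] theorem p2_zero : p2 (0 : Octo) = 0 := rfl
@[simp] theorem p1_one : p1 (1 : Octo) = 1 := rfl
@[simp] theorem p2_one : p2 (1 : Octo) = 0 := rfl
@[simp] theorem p1_smul (r : ℝ) (x : Octo) : p1 (r • x) = r • p1 x := rfl
@[simp] theorem p2_smul (r : ℝ) (x : Octo) : p2 (r • x) = r • p2 x := rfl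
@[simp] theorem p1_mk (a b : ℍ[ℝ]) : p1 (mk a b) = a := rfl
@[simp] theorem p2_mk (a b : ℍ[ℝ]) : p2 (mk a b) = b := rfl
@[simp] theorem p1_conj (x : Octo) : p1 (conj x) = star (p1 x) := rfl
@[simp] theorem p2_conj (x : Octo) : p2 (conj x) = -(p2 x) := rfl
@[simp] theorem p1_mul (x y : Octo) :
    p1 (x * y) = p1 x * p1 y - star (p2 y) * p2 x := rfl
@[simp] theorem p2_mul (x y : Octo) :
    p2 (x * y) = p2 y * p1 x + p2 x * star (p1 y) := rfl

def u1 : Octo := mk ⟨0, 1, 0, 0⟩ 0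
def u2 : Octo := mk ⟨0, 0, 1, 0⟩ 0
def u3 : Octo := mk ⟨0, 0, 0, 1⟩ 0
def u4 : Octo := mk 0 ⟨1, 0, 0, 0⟩
def u5 : Octo := mk 0 ⟨0, 1, 0, 0⟩
def u6 : Octo := mk 0 ⟨0, 0, 1, 0⟩
def u7 : Octo := mk 0 ⟨0, 0, 0, 1⟩

@[simp] theorem p1_u1_re : (p1 u1).re = 0 := rfl
@[simp] theorem p1_u1_imI : (p1 u1).imI = 1 := rfl
@[simp] theorem p1_u1_imJ : (p1 u1).imJ = 0 := rfl
@[simp] theorem p1_u1_imK : (p1 u1).imK = 0 := rfl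
@[simp] theorem p2_u1 : p2 u1 = 0 := rfl
@[simp] theorem p1_u2_re : (p1 u2).re = 0 := rfl
@[simp] theorem p1_u2_imI : (p1 u2).imI = 0 := rfl
@[simp] theorem p1_u2_imJ : (p1 u2).imJ = 1 := rfl
@[simp] theorem p1_u2_imK : (p1 u2).imK = 0 := rfl
@[simp] theorem p2_u2 : p2 u2 = 0 := rfl
@[simp] theorem p1_u3_re : (p1 u3).re = 0 := rfl
@[simp] theorem p1_u3_imI : (p1 u3).imI = 0 := rfl
@[simp] theorem p1_u3_imJ : (p1 u3).imJ = 0 := rfl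
@[simp] theorem p1_u3_imK : (p1 u3).imK = 1 := rfl
@[simp] theorem p2_u3 : p2 u3 = 0 := rfl
@[simp] theorem p2_u4_re : (p2 u4).re = 1 := rfl
@[simp] theorem p2_u4_imI : (p2 u4).imI = 0 := rfl
@[simp] theorem p2_u4_imJ : (p2 u4).imJ = 0 := rfl
@[simp] theorem p2_u4_imK : (p2 u4).imK = 0 := rfl
@[simp] theorem p1_u4 : p1 u4 = 0 := rfl
@[simp] theorem p2_u5_re : (p2 u5).re = 0 := rfl
@[simp] theorem p2_u5_imI : (p2 u5).imI = 1 := rfl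
@[simp] theorem p2_u5_imJ : (p2 u5).imJ = 0 := rfl
@[simp] theorem p2_u5_imK : (p2 u5).imK = 0 := rfl
@[simp] theorem p1_u5 : p1 u5 = 0 := rfl
@[simp] theorem p2_u6_re : (p2 u6).re = 0 := rfl
@[simp] theorem p2_u6_imI : (p2 u6).imI = 0 := rfl
@[simp] theorem p2_u6_imJ : (p2 u6).imJ = 1 := rfl
@[simp] theorem p2_u6_imK : (p2 u6).imK = 0 := rfl
@[simp] theorem p1_u6 : p1 u6 = 0 := rfl
@[simp] theorem p2_u7_re : (p2 u7).re = 0 := rfl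
@[simp] theorem p2_u7_imI : (p2 u7).imI = 0 := rfl
@[simp] theorem p2_u7_imJ : (p2 u7).imJ = 0 := rfl
@[simp] theorem p2_u7_imK : (p2 u7).imK = 1 := rfl
@[simp] theorem p1_u7 : p1 u7 = 0 := rfl

theorem decomp (p : Octo) : p = (p1 p).re • (1 : Octo) + (p1 p).imI • u1 + (p1 p).imJ • u2
    + (p1 p).imK • u3 + (p2 p).re • u4 + (p2 p).imI • u5 + (p2 p).imJ • u6
    + (p2 p).imK • u7 := by
  apply ext' <;> ext <;> simp

theorem conj_conj (p : Octo) : conj (conj p) = p := by apply ext' <;> simp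

theorem conj_mul (p q : Octo) : conj (p * q) = conj q * conj p := by
  apply ext' <;> ext <;> simp <;> ring

theorem mul_add' (p x y : Octo) : p * (x + y) = p * x + p * y := by
  apply ext' <;> ext <;> simp <;> ring

theorem add_mul' (p x y : Octo) : (x + y) * p = x * p + y * p := by
  apply ext' <;> ext <;> simp <;> ring

theorem smul_mul' (r : ℝ) (p x : Octo) : (r • p) * x = r • (p * x) := by
  apply ext' <;> ext <;> simp <;> ring

theorem mul_smul' (r : ℝ) (p x : Octo) : p * (r • x) = r • (p * x) := by
  apply ext' <;> ext <;> simp <;> ring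

theorem one_mul' (x : Octo) : 1 * x = x := by
  apply ext' <;> ext <;> simp

theorem conj_add (p q : Octo) : conj (p + q) = conj p + conj q := by
  apply ext' <;> ext <;> simp <;> ring

theorem conj_smul (r : ℝ) (p : Octo) : conj (r • p) = r • conj p := by
  apply ext' <;> ext <;> simp

theorem conj_one : conj (1 : Octo) = 1 := by
  apply ext' <;> ext <;> simp

set_option maxHeartbeats 4000000 in
theorem alt_left (p q x : Octo) :
    p * q * x - p * (q * x) = -(q * p * x - q * (p * x)) := by
  apply ext' <;> ext <;> simp <;> ring

theorem eq_real_of_assoc (x : Octo) (h : ∀ p q : Octo, (p * q) * x = p * (q * x)) :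
    x = (p1 x).re • (1 : Octo) := by
  have key : ∀ p q : Octo, _ := fun p q =>
    And.intro (congrArg p1 (h p q)) (congrArg p2 (h p q))
  have a := key u1 u2
  have b := key u1 u4
  have c := key u2 u4
  simp [Quaternion.ext_iff] at a b c
  apply ext' <;> ext <;> simp <;> linarith

theorem eq_zero_of_conjAssoc (x : Octo) (h : ∀ p q : Octo, (p * q) * x = q * (p * x)) :
    x = 0 := by
  have key : ∀ p q : Octo, _ := fun p q =>
    And.intro (congrArg p1 (h p q)) (congrArg p2 (h p q))
  have a := key u1 u2
  have b := key u1 u4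
  have c := key u2 u4
  have d := key u3 u4
  simp [Quaternion.ext_iff] at a b c d
  apply ext' <;> ext <;> simp <;> linarith

end Octo

section Main
open Octo

variable {M : Type*} [AddCommGroup M] [Module ℝ M]

/-- Left multiplication as a linear map. -/
def IsOMod.L {sm : Octo → M → M} (h : IsOMod sm) (p : Octo) : M →ₗ[ℝ] M where
  toFun := sm p
  map_add' := h.smul_add p
  map_smul' r m := h.smul_real r p m

/-- Clifford generators. -/
structure Cliff (e1 e2 e3 e4 e5 e6 e7 : M →ₗ[ℝ] M) : Prop where
  h11 : ∀ x, e1 (e1 x) = -x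
  h22 : ∀ x, e2 (e2 x) = -x
  h33 : ∀ x, e3 (e3 x) = -x
  h44 : ∀ x, e4 (e4 x) = -x
  h55 : ∀ x, e5 (e5 x) = -x
  h66 : ∀ x, e6 (e6 x) = -x
  h77 : ∀ x, e7 (e7 x) = -x
  h21 : ∀ x, e2 (e1 x) = -e1 (e2 x)
  h31 : ∀ x, e3 (e1 x) = -e1 (e3 x)
  h41 : ∀ x, e4 (e1 x) = -e1 (e4 x)
  h51 : ∀ x, e5 (e1 x) = -e1 (e5 x)
  h61 : ∀ x, e6 (e1 x) = -e1 (e6 x)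
  h71 : ∀ x, e7 (e1 x) = -e1 (e7 x)
  h32 : ∀ x, e3 (e2 x) = -e2 (e3 x)
  h42 : ∀ x, e4 (e2 x) = -e2 (e4 x)
  h52 : ∀ x, e5 (e2 x) = -e2 (e5 x)
  h62 : ∀ x, e6 (e2 x) = -e2 (e6 x)
  h72 : ∀ x, e7 (e2 x) = -e2 (e7 x)
  h43 : ∀ x, e4 (e3 x) = -e3 (e4 x)
  h53 : ∀ x, e5 (e3 x) = -e3 (e5 x)
  h63 : ∀ x, e6 (e3 x) = -e3 (e6 x)
  h73 : ∀ x, e7 (e3 x) = -e3 (e7 x)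
  h54 : ∀ x, e5 (e4 x) = -e4 (e5 x)
  h64 : ∀ x, e6 (e4 x) = -e4 (e6 x)
  h74 : ∀ x, e7 (e4 x) = -e4 (e7 x)
  h65 : ∀ x, e6 (e5 x) = -e5 (e6 x)
  h75 : ∀ x, e7 (e5 x) = -e5 (e7 x)
  h76 : ∀ x, e7 (e6 x) = -e6 (e7 x)

theorem IsOMod.anti {sm : Octo → M → M} (h : IsOMod sm) (p q : Octo) (hpq : p * q + q * p = 0)
    (m : M) : h.L p (h.L q m) = - h.L q (h.L p m) := by
  have h1 := h.alt p q m
  have h2 := h.add_smul (p * q) (q * p) m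
  have h3 := h.real_smul 0 0 m
  rw [hpq] at h2
  simp only [zero_smul] at h3
  rw [h3] at h2
  change sm p (sm q m) = - sm q (sm p m)
  linear_combination (norm := module) (-1 : ℝ) • h1 - h2

theorem IsOMod.sq {sm : Octo → M → M} (h : IsOMod sm) (p : Octo) (hp : p * p = (-1 : ℝ) • (1 : Octo))
    (m : M) : h.L p (h.L p m) = - m := by
  have h1 := h.alt p p m
  rw [hp, h.real_smul, h.one_smul] at h1
  change sm p (sm p m) = - m
  linear_combination (norm := module) (-1/2 : ℝ) • h1

theorem IsOMod.cliff {sm : Octo → M → M} (h : IsOMod sm) :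
    Cliff (h.L u1) (h.L u2) (h.L u3) (h.L u4) (h.L u5) (h.L u6) (h.L u7) := by
  constructor
  iterate 7
    · exact h.sq _ (by apply ext' <;> ext <;> simp)
  all_goals
    exact h.anti _ _ (by apply ext' <;> ext <;> simp)

theorem IsOMod.L_expand {sm : Octo → M → M} (h : IsOMod sm) (p : Octo) (m : M) :
    sm p m = (p1 p).re • m + (p1 p).imI • h.L u1 m + (p1 p).imJ • h.L u2 m
    + (p1 p).imK • h.L u3 m + (p2 p).re • h.L u4 m + (p2 p).imI • h.L u5 m
    + (p2 p).imJ • h.L u6 m + (p2 p).imK • h.L u7 m := by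
  conv_lhs => rw [decomp p]
  simp only [h.add_smul, h.real_smul, h.one_smul]
  rfl

theorem IsOMod.mem_assoc {sm : Octo → M → M} (h : IsOMod sm) (v : M)
    (t3 : h.L u3 v = h.L u1 (h.L u2 v)) (t5 : h.L u5 v = h.L u1 (h.L u4 v))
    (t6 : h.L u6 v = h.L u2 (h.L u4 v)) (t7 : h.L u7 v = h.L u3 (h.L u4 v)) :
    v ∈ assocSet sm := by
  intro p q
  have hc := h.cliff
  unfold oLassoc
  rw [sub_eq_zero, h.L_expand p, h.L_expand q, h.L_expand (p * q)]
  generalize h.L u1 = e1 at *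
  generalize h.L u2 = e2 at *
  generalize h.L u3 = e3 at *
  generalize h.L u4 = e4 at *
  generalize h.L u5 = e5 at *
  generalize h.L u6 = e6 at *
  generalize h.L u7 = e7 at *
  obtain ⟨h11, h22, h33, h44, h55, h66, h77, h21, h31, h41, h51, h61, h71, h32, h42, h52, h62,
    h72, h43, h53, h63, h73, h54, h64, h74, h65, h75, h76⟩ := hc
  have s7 : e7 v = -e1 (e2 (e4 v)) := by
    rw [t7, ← neg_eq_iff_eq_neg.mpr (h43 v), t3, h41, h42]; simp
  have h34 : ∀ x, e3 (e4 x) = - e4 (e3 x) := fun x => by rw [h43, neg_neg]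
  simp only [map_add, map_smul, map_neg, t3, t5, t6, s7, h11, h22, h44, h21, h31, h41, h51, h61,
    h71, h32, h42, h52, h62, h72, h34, h54, h64, h74, p1_mul, p2_mul, neg_neg]
  simp only [Quaternion.re_sub, Quaternion.imI_sub, Quaternion.imJ_sub, Quaternion.imK_sub,
    Quaternion.re_add, Quaternion.imI_add, Quaternion.imJ_add, Quaternion.imK_add,
    Quaternion.re_mul, Quaternion.imI_mul, Quaternion.imJ_mul, Quaternion.imK_mul,
    Quaternion.re_star, Quaternion.imI_star, Quaternion.imJ_star, Quaternion.imK_star]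
  module

/-- The conjugate module. -/
theorem IsOMod.bar {sm : Octo → M → M} (h : IsOMod sm) : IsOMod (fun p m => sm (conj p) m) where
  smul_add p m n := h.smul_add _ m n
  add_smul p q m := by simp only [conj_add, h.add_smul]
  real_smul r p m := by simp only [conj_smul, h.real_smul]
  smul_real r p m := h.smul_real r _ m
  one_smul m := by simp only [conj_one, h.one_smul]
  alt p q m := by
    simp only [conj_mul]
    linear_combination (norm := module) h.alt (conj p) (conj q) m

theorem mem_conjAssoc_iff {sm : Octo → M → M} (v : M) :
    v ∈ conjAssocSet sm ↔ v ∈ assocSet (fun p m => sm (conj p) m) := by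
  constructor
  · intro hv p q
    simp only [oLassoc, conj_mul]
    rw [sub_eq_zero]; exact hv _ _
  · intro hv p q
    have := hv (conj q) (conj p)
    simp only [oLassoc, conj_mul, conj_conj] at this
    rwa [sub_eq_zero] at this

theorem IsOMod.bar_L {sm : Octo → M → M} (h : IsOMod sm) (u : Octo)
    (hu : conj u = (-1 : ℝ) • u) (m : M) : h.bar.L u m = - h.L u m := by
  change sm (conj u) m = - sm u m
  rw [hu, h.real_smul]; simp

theorem IsOMod.mem_conjAssoc {sm : Octo → M → M} (h : IsOMod sm) (v : M)
    (t3 : h.L u3 v = -h.L u1 (h.L u2 v)) (t5 : h.L u5 v = -h.L u1 (h.L u4 v))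
    (t6 : h.L u6 v = -h.L u2 (h.L u4 v)) (t7 : h.L u7 v = -h.L u3 (h.L u4 v)) :
    v ∈ conjAssocSet sm := by
  rw [mem_conjAssoc_iff]
  have k1 := h.bar_L u1 (by apply ext' <;> ext <;> simp)
  have k2 := h.bar_L u2 (by apply ext' <;> ext <;> simp)
  have k3 := h.bar_L u3 (by apply ext' <;> ext <;> simp)
  have k4 := h.bar_L u4 (by apply ext' <;> ext <;> simp)
  have k5 := h.bar_L u5 (by apply ext' <;> ext <;> simp)
  have k6 := h.bar_L u6 (by apply ext' <;> ext <;> simp)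
  have k7 := h.bar_L u7 (by apply ext' <;> ext <;> simp)
  apply h.bar.mem_assoc v <;> simp [k1, k2, k3, k4, k5, k6, k7, t3, t5, t6, t7]

theorem step_mem (N : Submodule ℝ M) (T : M →ₗ[ℝ] M) (v : M)
    (H : ∀ s : ℝ, (s = 1 ∨ s = -1) → v + s • T v ∈ N) : v ∈ N := by
  have h1 := H 1 (Or.inl rfl)
  have h2 := H (-1) (Or.inr rfl)
  have : v = (1/2 : ℝ) • ((v + (1:ℝ) • T v) + (v + (-1:ℝ) • T v)) := by module
  rw [this]
  exact N.smul_mem _ (N.add_mem h1 h2)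

theorem step_eig (T : M →ₗ[ℝ] M) (hT : ∀ x, T (T x) = x) (v : M) (s : ℝ) (hs : s = 1 ∨ s = -1) :
    T (v + s • T v) = s • (v + s • T v) := by
  rcases hs with rfl | rfl <;> simp [hT] <;> abel

theorem step_comm (T S : M →ₗ[ℝ] M) (hTS : ∀ x, T (S x) = S (T x)) (v : M) (r s : ℝ)
    (hv : T v = r • v) : T (v + s • S v) = r • (v + s • S v) := by
  simp only [map_add, map_smul, hTS, hv]; module

theorem cliff_mem {e1 e2 e3 e4 e5 e6 e7 : M →ₗ[ℝ] M} (hc : Cliff e1 e2 e3 e4 e5 e6 e7)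
    (K N : Submodule ℝ M)
    (K1 : ∀ x ∈ K, e1 x ∈ K) (K2 : ∀ x ∈ K, e2 x ∈ K) (K3 : ∀ x ∈ K, e3 x ∈ K)
    (K4 : ∀ x ∈ K, e4 x ∈ K) (K5 : ∀ x ∈ K, e5 x ∈ K) (K6 : ∀ x ∈ K, e6 x ∈ K)
    (K7 : ∀ x ∈ K, e7 x ∈ K)
    (N1 : ∀ x ∈ N, e1 x ∈ N) (N2 : ∀ x ∈ N, e2 x ∈ N) (N3 : ∀ x ∈ N, e3 x ∈ N)
    (N4 : ∀ x ∈ N, e4 x ∈ N) (N5 : ∀ x ∈ N, e5 x ∈ N) (N6 : ∀ x ∈ N, e6 x ∈ N)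
    (N7 : ∀ x ∈ N, e7 x ∈ N)
    (H : ∀ v ∈ K, ∀ s : ℝ, (s = 1 ∨ s = -1) → e3 v = s • e1 (e2 v) → e5 v = s • e1 (e4 v) →
      e6 v = s • e2 (e4 v) → e7 v = s • e3 (e4 v) → v ∈ N) : K ≤ N := by
  obtain ⟨h11, h22, h33, h44, h55, h66, h77, h21, h31, h41, h51, h61, h71, h32, h42, h52, h62,
    h72, h43, h53, h63, h73, h54, h64, h74, h65, h75, h76⟩ := hc
  obtain ⟨T1, hT1⟩ : ∃ T : M →ₗ[ℝ] M, ∀ x, T x = -e3 (e1 (e2 x)) :=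
    ⟨-(e3 ∘ₗ e1 ∘ₗ e2), fun x => rfl⟩
  obtain ⟨T2, hT2⟩ : ∃ T : M →ₗ[ℝ] M, ∀ x, T x = -e5 (e1 (e4 x)) :=
    ⟨-(e5 ∘ₗ e1 ∘ₗ e4), fun x => rfl⟩
  obtain ⟨T3, hT3⟩ : ∃ T : M →ₗ[ℝ] M, ∀ x, T x = -e6 (e2 (e4 x)) :=
    ⟨-(e6 ∘ₗ e2 ∘ₗ e4), fun x => rfl⟩
  obtain ⟨T4, hT4⟩ : ∃ T : M →ₗ[ℝ] M, ∀ x, T x = -e7 (e3 (e4 x)) :=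
    ⟨-(e7 ∘ₗ e3 ∘ₗ e4), fun x => rfl⟩
  -- reformulated final hypothesis
  have H' : ∀ v ∈ K, ∀ s : ℝ, (s = 1 ∨ s = -1) → T1 v = s • v → T2 v = s • v →
      T3 v = s • v → T4 v = s • v → v ∈ N := by
    intro v hv s hs a1 a2 a3 a4
    have hss : s * s = 1 := by rcases hs with rfl | rfl <;> norm_num
    have aux : ∀ (e : M →ₗ[ℝ] M) (w : M), (∀ x, e (e x) = -x) → -e w = s • v → e v = s • w := by
      intro e w he hw
      have := congrArg e hw
      rw [map_neg, he, neg_neg, map_smul] at this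
      rw [this, smul_smul, hss, one_smul]
    exact H v hv s hs (aux _ _ h33 (by rw [← hT1, a1])) (aux _ _ h55 (by rw [← hT2, a2]))
      (aux _ _ h66 (by rw [← hT3, a3])) (aux _ _ h77 (by rw [← hT4, a4]))
  have TK1 : ∀ x ∈ K, T1 x ∈ K := fun x hx => by
    rw [hT1]; exact K.neg_mem (K3 _ (K1 _ (K2 _ hx)))
  have TK2 : ∀ x ∈ K, T2 x ∈ K := fun x hx => by
    rw [hT2]; exact K.neg_mem (K5 _ (K1 _ (K4 _ hx)))
  have TK3 : ∀ x ∈ K, T3 x ∈ K := fun x hx => by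
    rw [hT3]; exact K.neg_mem (K6 _ (K2 _ (K4 _ hx)))
  have TK4 : ∀ x ∈ K, T4 x ∈ K := fun x hx => by
    rw [hT4]; exact K.neg_mem (K7 _ (K3 _ (K4 _ hx)))
  have q1 : ∀ x, T1 (T1 x) = x := fun x => by
    simp only [hT1, map_neg, neg_neg, h11, h22, h33, h21, h31, h32]
  have q2 : ∀ x, T2 (T2 x) = x := fun x => by
    simp only [hT2, map_neg, neg_neg, h11, h44, h55, h41, h51, h54]
  have q3 : ∀ x, T3 (T3 x) = x := fun x => by
    simp only [hT3, map_neg, neg_neg, h22, h44, h66, h42, h62, h64]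
  have q4 : ∀ x, T4 (T4 x) = x := fun x => by
    simp only [hT4, map_neg, neg_neg, h33, h44, h77, h43, h73, h74]
  have c12 : ∀ x, T1 (T2 x) = T2 (T1 x) := fun x => by
    simp only [hT1, hT2, map_neg, neg_neg, h11, h22, h33, h44, h55, h21, h31, h41, h51, h32, h42,
      h52, h43, h53, h54]
  have c13 : ∀ x, T1 (T3 x) = T3 (T1 x) := fun x => by
    simp only [hT1, hT3, map_neg, neg_neg, h11, h22, h33, h44, h66, h21, h31, h41, h61, h32, h42,
      h62, h43, h63, h64]
  have c14 : ∀ x, T1 (T4 x) = T4 (T1 x) := fun x => by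
    simp only [hT1, hT4, map_neg, neg_neg, h11, h22, h33, h44, h77, h21, h31, h41, h71, h32, h42,
      h72, h43, h73, h74]
  have c23 : ∀ x, T2 (T3 x) = T3 (T2 x) := fun x => by
    simp only [hT2, hT3, map_neg, neg_neg, h11, h22, h44, h55, h66, h21, h41, h51, h61, h42, h52,
      h62, h54, h64, h65]
  have c24 : ∀ x, T2 (T4 x) = T4 (T2 x) := fun x => by
    simp only [hT2, hT4, map_neg, neg_neg, h11, h33, h44, h55, h77, h31, h41, h51, h71, h43, h53,
      h73, h54, h74, h75]
  have c34 : ∀ x, T3 (T4 x) = T4 (T3 x) := fun x => by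
    simp only [hT3, hT4, map_neg, neg_neg, h22, h33, h44, h66, h77, h32, h42, h62, h72, h43, h63,
      h73, h64, h74, h76]
  -- moving an eigenvector by a generator
  have back : ∀ (e : M →ₗ[ℝ] M), (∀ x, e (e x) = -x) → (∀ x ∈ N, e x ∈ N) → ∀ v, e v ∈ N →
      v ∈ N := by
    intro e he hN v hv
    have := hN _ hv
    rw [he] at this
    exact neg_mem_iff.mp this
  have fin : ∀ v ∈ K, ∀ s1 s2 s3 s4 : ℝ, (s1 = 1 ∨ s1 = -1) → (s2 = 1 ∨ s2 = -1) →
      (s3 = 1 ∨ s3 = -1) → (s4 = 1 ∨ s4 = -1) → T1 v = s1 • v → T2 v = s2 • v →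
      T3 v = s3 • v → T4 v = s4 • v → v ∈ N := by
    intro v hv s1 s2 s3 s4 hs1 hs2 hs3 hs4 a1 a2 a3 a4
    have mv : ∀ (e : M →ₗ[ℝ] M), (∀ x, e (e x) = -x) → (∀ x ∈ N, e x ∈ N) → (∀ x ∈ K, e x ∈ K) →
        ∀ (t1 t2 t3 t4 : ℝ), T1 (e v) = t1 • e (T1 v) → T2 (e v) = t2 • e (T2 v) →
        T3 (e v) = t3 • e (T3 v) → T4 (e v) = t4 • e (T4 v) →
        ∀ s : ℝ, (s = 1 ∨ s = -1) → t1 * s1 = s → t2 * s2 = s → t3 * s3 = s → t4 * s4 = s →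
        v ∈ N := by
      intro e he hN hK t1 t2 t3 t4 b1 b2 b3 b4 s hs r1 r2 r3 r4
      refine back e he hN v (H' (e v) (hK v hv) s hs ?_ ?_ ?_ ?_)
      · rw [b1, a1, map_smul, smul_smul, r1]
      · rw [b2, a2, map_smul, smul_smul, r2]
      · rw [b3, a3, map_smul, smul_smul, r3]
      · rw [b4, a4, map_smul, smul_smul, r4]
    have m1 := mv e1 h11 N1 K1 1 1 (-1) (-1)
    have m2 := mv e2 h22 N2 K2 1 (-1) 1 (-1)
    have m3 := mv e3 h33 N3 K3 1 (-1) (-1) 1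
    have m4 := mv e4 h44 N4 K4 (-1) 1 1 1
    have m5 := mv e5 h55 N5 K5 (-1) 1 (-1) (-1)
    have m6 := mv e6 h66 N6 K6 (-1) (-1) 1 (-1)
    have m7 := mv e7 h77 N7 K7 (-1) (-1) (-1) 1
    simp only [hT1, hT2, hT3, hT4, map_neg, neg_neg, neg_smul, one_smul, h11, h22, h33, h44,
        h55, h66, h77, h21, h31, h41, h51, h61, h71, h32, h42, h52, h62, h72, h43, h53, h63, h73,
        h54, h64, h74, h65, h75, h76, forall_const] at m1 m2 m3 m4 m5 m6 m7
    have m0 := H' v hv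
    rcases hs1 with rfl | rfl <;> rcases hs2 with rfl | rfl <;> rcases hs3 with rfl | rfl <;>
      rcases hs4 with rfl | rfl
    · exact m0 1 (Or.inl rfl) a1 a2 a3 a4
    · exact m7 (-1) (Or.inr rfl) (by norm_num) (by norm_num) (by norm_num) (by norm_num)
    · exact m6 (-1) (Or.inr rfl) (by norm_num) (by norm_num) (by norm_num) (by norm_num)
    · exact m1 1 (Or.inl rfl) (by norm_num) (by norm_num) (by norm_num) (by norm_num)
    · exact m5 (-1) (Or.inr rfl) (by norm_num) (by norm_num) (by norm_num) (by norm_num)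
    · exact m2 1 (Or.inl rfl) (by norm_num) (by norm_num) (by norm_num) (by norm_num)
    · exact m3 1 (Or.inl rfl) (by norm_num) (by norm_num) (by norm_num) (by norm_num)
    · exact m4 (-1) (Or.inr rfl) (by norm_num) (by norm_num) (by norm_num) (by norm_num)
    · exact m4 1 (Or.inl rfl) (by norm_num) (by norm_num) (by norm_num) (by norm_num)
    · exact m3 (-1) (Or.inr rfl) (by norm_num) (by norm_num) (by norm_num) (by norm_num)
    · exact m2 (-1) (Or.inr rfl) (by norm_num) (by norm_num) (by norm_num) (by norm_num)
    · exact m5 1 (Or.inl rfl) (by norm_num) (by norm_num) (by norm_num) (by norm_num)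
    · exact m1 (-1) (Or.inr rfl) (by norm_num) (by norm_num) (by norm_num) (by norm_num)
    · exact m6 1 (Or.inl rfl) (by norm_num) (by norm_num) (by norm_num) (by norm_num)
    · exact m7 1 (Or.inl rfl) (by norm_num) (by norm_num) (by norm_num) (by norm_num)
    · exact m0 (-1) (Or.inr rfl) a1 a2 a3 a4
  intro m hm
  refine step_mem N T1 m fun s1 hs1 => ?_
  have w1 : m + s1 • T1 m ∈ K := K.add_mem hm (K.smul_mem _ (TK1 _ hm))
  have a1 := step_eig T1 q1 m s1 hs1
  generalize m + s1 • T1 m = v1 at *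
  refine step_mem N T2 v1 fun s2 hs2 => ?_
  have w2 : v1 + s2 • T2 v1 ∈ K := K.add_mem w1 (K.smul_mem _ (TK2 _ w1))
  have b1 := step_comm T1 T2 c12 v1 s1 s2 a1
  have b2 := step_eig T2 q2 v1 s2 hs2
  generalize v1 + s2 • T2 v1 = v2 at *
  refine step_mem N T3 v2 fun s3 hs3 => ?_
  have w3 : v2 + s3 • T3 v2 ∈ K := K.add_mem w2 (K.smul_mem _ (TK3 _ w2))
  have d1 := step_comm T1 T3 c13 v2 s1 s3 b1
  have d2 := step_comm T2 T3 c23 v2 s2 s3 b2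
  have d3 := step_eig T3 q3 v2 s3 hs3
  generalize v2 + s3 • T3 v2 = v3 at *
  refine step_mem N T4 v3 fun s4 hs4 => ?_
  have w4 : v3 + s4 • T4 v3 ∈ K := K.add_mem w3 (K.smul_mem _ (TK4 _ w3))
  exact fin _ w4 s1 s2 s3 s4 hs1 hs2 hs3 hs4
    (step_comm T1 T4 c14 v3 s1 s4 d1) (step_comm T2 T4 c24 v3 s2 s4 d2)
    (step_comm T3 T4 c34 v3 s3 s4 d3) (step_eig T4 q4 v3 s4 hs4)

theorem IsOMod.le_of_mem {sm : Octo → M → M} (h : IsOMod sm) (K N : Submodule ℝ M)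
    (hK : ∀ p, ∀ x ∈ K, sm p x ∈ K) (hN : ∀ p, ∀ x ∈ N, sm p x ∈ N)
    (HA : ∀ v ∈ K, v ∈ assocSet sm → v ∈ N) (HB : ∀ v ∈ K, v ∈ conjAssocSet sm → v ∈ N) :
    K ≤ N := by
  refine cliff_mem h.cliff K N (hK _) (hK _) (hK _) (hK _) (hK _) (hK _) (hK _)
    (hN _) (hN _) (hN _) (hN _) (hN _) (hN _) (hN _) ?_
  intro v hv s hs t3 t5 t6 t7
  rcases hs with rfl | rfl
  · simp only [_root_.one_smul] at t3 t5 t6 t7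
    exact HA v hv (h.mem_assoc v t3 t5 t6 t7)
  · simp only [neg_smul, _root_.one_smul] at t3 t5 t6 t7
    exact HB v hv (h.mem_conjAssoc v t3 t5 t6 t7)

/-- The associative elements as a real subspace. -/
def IsOMod.assocSub {sm : Octo → M → M} (h : IsOMod sm) : Submodule ℝ M where
  carrier := assocSet sm
  zero_mem' := fun p q => by
    have : ∀ p, sm p 0 = 0 := fun p => (h.L p).map_zero
    simp [oLassoc, this]
  add_mem' := fun {a b} ha hb p q => by
    have h1 := ha p q
    have h2 := hb p q
    simp only [oLassoc, h.smul_add] at *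
    linear_combination (norm := module) h1 + h2
  smul_mem' := fun r a ha p q => by
    have h1 := ha p q
    simp only [oLassoc, h.smul_real] at *
    linear_combination (norm := module) r • h1

theorem IsOMod.span_assoc {sm : Octo → M → M} (h : IsOMod sm) :
    (Submodule.span ℝ (assocSet sm) : Set M) = assocSet sm := by
  have : Submodule.span ℝ (assocSet sm) = h.assocSub := Submodule.span_eq h.assocSub
  rw [this]; rfl

theorem IsOMod.span_conjAssoc {sm : Octo → M → M} (h : IsOMod sm) :
    (Submodule.span ℝ (conjAssocSet sm) : Set M) = conjAssocSet sm := by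
  have : conjAssocSet sm = assocSet (fun p m => sm (conj p) m) := by
    ext v; exact mem_conjAssoc_iff v
  rw [this]; exact h.bar.span_assoc

theorem pair_isOMod (n₁ n₂ : ℕ) : IsOMod (pairSmul n₁ n₂) where
  smul_add p m n := by
    apply Prod.ext <;> funext i <;> exact mul_add' _ _ _
  add_smul p q m := by
    apply Prod.ext <;> funext i
    · exact add_mul' _ _ _
    · simp only [pairSmul, conj_add]; exact add_mul' _ _ _
  real_smul r p m := by
    apply Prod.ext <;> funext i
    · exact smul_mul' _ _ _
    · simp only [pairSmul, conj_smul]; exact smul_mul' _ _ _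
  smul_real r p m := by
    apply Prod.ext <;> funext i <;> exact mul_smul' _ _ _
  one_smul m := by
    apply Prod.ext <;> funext i
    · exact one_mul' _
    · simp only [pairSmul, conj_one]; exact one_mul' _
  alt p q m := by
    apply Prod.ext <;> funext i
    · exact alt_left _ _ _
    · simp only [pairSmul, conj_mul]
      have := alt_left (conj p) (conj q) (m.2 i)
      change conj q * conj p * m.2 i - conj p * (conj q * m.2 i)
        = -(conj p * conj q * m.2 i - conj q * (conj p * m.2 i))
      linear_combination (norm := module) this

theorem finrank_octo : Module.finrank ℝ Octo = 8 := by
  have : Module.finrank ℝ (ℍ[ℝ] × ℍ[ℝ]) = 8 := by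
    rw [Module.finrank_prod, Quaternion.finrank_eq_four]
  exact this

instance : FiniteDimensional ℝ Octo := inferInstanceAs (FiniteDimensional ℝ (ℍ[ℝ] × ℍ[ℝ]))

/-- The comparison map. -/
def IsOMod.phi {sm : Octo → M → M} (h : IsOMod sm) {n₁ n₂ : ℕ} (a : Fin n₁ → M)
    (b : Fin n₂ → M) : ((Fin n₁ → Octo) × (Fin n₂ → Octo)) →ₗ[ℝ] M where
  toFun x := ∑ i, sm (x.1 i) (a i) + ∑ i, sm (conj (x.2 i)) (b i)
  map_add' x y := by
    simp only [Prod.fst_add, Prod.snd_add, Pi.add_apply, conj_add, h.add_smul,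
      Finset.sum_add_distrib]
    abel
  map_smul' r x := by
    simp only [Prod.smul_fst, Prod.smul_snd, Pi.smul_apply, conj_smul, h.real_smul,
      RingHom.id_apply, _root_.smul_add, Finset.smul_sum]

theorem IsOMod.phi_hom {sm : Octo → M → M} (h : IsOMod sm) {n₁ n₂ : ℕ} (a : Fin n₁ → M)
    (b : Fin n₂ → M) (ha : ∀ i, a i ∈ assocSet sm) (hb : ∀ i, b i ∈ conjAssocSet sm)
    (p : Octo) (x) : h.phi a b (pairSmul n₁ n₂ p x) = sm p (h.phi a b x) := by
  change ∑ i, sm (p * x.1 i) (a i) + ∑ i, sm (conj (conj p * x.2 i)) (b i)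
    = h.L p (∑ i, sm (x.1 i) (a i) + ∑ i, sm (conj (x.2 i)) (b i))
  rw [map_add, map_sum, map_sum]
  congr 1
  · refine Finset.sum_congr rfl fun i _ => ?_
    exact sub_eq_zero.mp (ha i p (x.1 i))
  · refine Finset.sum_congr rfl fun i _ => ?_
    rw [conj_mul, conj_conj]
    exact hb i _ _

end Main

/-- A finite-dimensional left 𝕆-module of type `(n₁,n₂)` is isomorphic to
`𝕆^{n₁} ⊕ 𝕆̄^{n₂}`; in particular `dim_ℝ M = 8(n₁+n₂)`. -/
theorem stmt1 {M : Type*} [AddCommGroup M] [Module ℝ M] [FiniteDimensional ℝ M]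
    (sm : Octo → M → M) (h : IsOMod sm) (n₁ n₂ : ℕ)
    (hn₁ : n₁ = Module.finrank ℝ (Submodule.span ℝ (assocSet sm)))
    (hn₂ : n₂ = Module.finrank ℝ (Submodule.span ℝ (conjAssocSet sm))) :
    OIso sm (pairSmul n₁ n₂) ∧ Module.finrank ℝ M = 8 * (n₁ + n₂) := by
  classical
  let bA := Module.finBasisOfFinrankEq ℝ (Submodule.span ℝ (assocSet sm)) hn₁.symm
  let bB := Module.finBasisOfFinrankEq ℝ (Submodule.span ℝ (conjAssocSet sm)) hn₂.symm
  let a : Fin n₁ → M := fun i => (bA i : M)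
  let b : Fin n₂ → M := fun i => (bB i : M)
  have ha : ∀ i, a i ∈ assocSet sm := fun i => by
    rw [← h.span_assoc]; exact (bA i).2
  have hb : ∀ i, b i ∈ conjAssocSet sm := fun i => by
    rw [← h.span_conjAssoc]; exact (bB i).2
  have hhom := h.phi_hom a b ha hb
  have hP := pair_isOMod n₁ n₂
  have hsurj : (⊤ : Submodule ℝ M) ≤ LinearMap.range (h.phi a b) := by
    apply h.le_of_mem ⊤ (LinearMap.range (h.phi a b)) (fun _ _ _ => trivial)
    · rintro p _ ⟨x, rfl⟩
      exact ⟨_, hhom p x⟩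
    · intro v _ hv
      rw [← h.span_assoc] at hv
      refine ⟨(fun i => bA.repr ⟨v, hv⟩ i • (1 : Octo), 0), ?_⟩
      have e : (h.phi a b) (fun i => bA.repr ⟨v, hv⟩ i • (1 : Octo), 0)
          = ∑ i, bA.repr ⟨v, hv⟩ i • a i := by
        have z : ∀ m, sm (Octo.conj 0) m = 0 := fun m => by
          have := h.real_smul 0 0 m
          have c0 : Octo.conj 0 = 0 := by apply Octo.ext' <;> simp
          rw [c0]; simpa using this
        change ∑ i, sm (bA.repr ⟨v, hv⟩ i • (1 : Octo)) (a i) + ∑ i, sm (Octo.conj 0) (b i) = _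
        simp only [z, h.real_smul, h.one_smul, Finset.sum_const_zero, add_zero]
      rw [e]
      have := congrArg Subtype.val (bA.sum_repr ⟨v, hv⟩)
      rw [Submodule.coe_sum] at this
      exact this
    · intro v _ hv
      rw [← h.span_conjAssoc] at hv
      refine ⟨(0, fun i => bB.repr ⟨v, hv⟩ i • (1 : Octo)), ?_⟩
      have e : (h.phi a b) (0, fun i => bB.repr ⟨v, hv⟩ i • (1 : Octo))
          = ∑ i, bB.repr ⟨v, hv⟩ i • b i := by
        have z : ∀ m, sm 0 m = 0 := fun m => by
          have := h.real_smul 0 0 m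
          simpa using this
        change ∑ i, sm 0 (a i) + ∑ i, sm (Octo.conj (bB.repr ⟨v, hv⟩ i • (1 : Octo))) (b i) = _
        simp only [z, Octo.conj_smul, Octo.conj_one, h.real_smul, h.one_smul,
          Finset.sum_const_zero, zero_add]
      rw [e]
      have := congrArg Subtype.val (bB.sum_repr ⟨v, hv⟩)
      rw [Submodule.coe_sum] at this
      exact this
  have hinj : LinearMap.ker (h.phi a b) ≤ ⊥ := by
    apply hP.le_of_mem
    · intro p x hx
      rw [LinearMap.mem_ker] at hx ⊢
      rw [hhom, hx]
      exact (h.L p).map_zero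
    · intro p x hx
      rw [Submodule.mem_bot] at hx ⊢
      rw [hx]
      exact (hP.L p).map_zero
    · intro v hv hA
      have hx : ∀ i, v.1 i = (Octo.p1 (v.1 i)).re • (1 : Octo) := fun i =>
        Octo.eq_real_of_assoc _ fun p q =>
          sub_eq_zero.mp (congrFun (congrArg Prod.fst (hA p q)) i)
      have hy : ∀ i, v.2 i = 0 := fun i =>
        Octo.eq_zero_of_conjAssoc _ fun p q => by
          have := sub_eq_zero.mp (congrFun (congrArg Prod.snd (hA (Octo.conj q) (Octo.conj p))) i)
          simpa only [pairSmul, Octo.conj_mul, Octo.conj_conj] using this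
      have hv' : ∑ i, sm (v.1 i) (a i) + ∑ i, sm (Octo.conj (v.2 i)) (b i) = 0 := hv
      have z : ∀ m, sm (Octo.conj 0) m = 0 := fun m => by
        have := h.real_smul 0 0 m
        have c0 : Octo.conj 0 = 0 := by apply Octo.ext' <;> simp
        rw [c0]; simpa using this
      have s1 : ∑ i, sm (v.1 i) (a i) = ∑ i, (Octo.p1 (v.1 i)).re • a i :=
        Finset.sum_congr rfl fun i _ => by
          conv_lhs => rw [hx i]
          rw [h.real_smul, h.one_smul]
      simp only [hy, z, Finset.sum_const_zero, add_zero, s1] at hv'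
      have hsum : ∑ i, (Octo.p1 (v.1 i)).re • bA i = 0 := by
        apply Subtype.ext
        simpa using hv'
      have hz := Fintype.linearIndependent_iff.mp bA.linearIndependent _ hsum
      rw [Submodule.mem_bot]
      apply Prod.ext
      · funext i
        rw [hx i, hz i, zero_smul]; rfl
      · funext i
        exact hy i
    · intro v hv hA
      have hx : ∀ i, v.1 i = 0 := fun i =>
        Octo.eq_zero_of_conjAssoc _ fun p q => congrFun (congrArg Prod.fst (hA p q)) i
      have hy : ∀ i, v.2 i = (Octo.p1 (v.2 i)).re • (1 : Octo) := fun i =>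
        Octo.eq_real_of_assoc _ fun p q => by
          have := congrFun (congrArg Prod.snd (hA (Octo.conj q) (Octo.conj p))) i
          simpa only [pairSmul, Octo.conj_mul, Octo.conj_conj] using this
      have hv' : ∑ i, sm (v.1 i) (a i) + ∑ i, sm (Octo.conj (v.2 i)) (b i) = 0 := hv
      have z : ∀ m, sm 0 m = 0 := fun m => by
        have := h.real_smul 0 0 m
        simpa using this
      have s1 : ∑ i, sm (Octo.conj (v.2 i)) (b i) = ∑ i, (Octo.p1 (v.2 i)).re • b i :=
        Finset.sum_congr rfl fun i _ => by
          conv_lhs => rw [hy i]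
          rw [Octo.conj_smul, Octo.conj_one, h.real_smul, h.one_smul]
      simp only [hx, z, Finset.sum_const_zero, zero_add, s1] at hv'
      have hsum : ∑ i, (Octo.p1 (v.2 i)).re • bB i = 0 := by
        apply Subtype.ext
        simpa using hv'
      have hz := Fintype.linearIndependent_iff.mp bB.linearIndependent _ hsum
      rw [Submodule.mem_bot]
      apply Prod.ext
      · funext i
        exact hx i
      · funext i
        rw [hy i, hz i, zero_smul]; rfl
  let E := LinearEquiv.ofBijective (h.phi a b)
    ⟨LinearMap.ker_eq_bot.mp (le_bot_iff.mp hinj), LinearMap.range_eq_top.mp (top_le_iff.mp hsurj)⟩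
  refine ⟨⟨E.symm, ⟨E.symm.toLinearMap.isLinear, ?_⟩, E.symm.bijective⟩, ?_⟩
  · intro p m
    rw [LinearEquiv.symm_apply_eq]
    have := hhom p (E.symm m)
    change sm p m = h.phi a b _
    rw [this]
    congr 1
    exact (E.apply_symm_apply m).symm
  · rw [← E.finrank_eq, Module.finrank_prod, Module.finrank_pi_fintype, Module.finrank_pi_fintype]
    simp only [finrank_octo, Finset.sum_const, Finset.card_univ, Fintype.card_fin, smul_eq_mul]
    ring
end
end

section
/- For any left 𝕆-module M, the set of cyclic elements satisfies 𝒞(M) = (⋃_{p ∈ 𝕆} p·𝒜(M)) ∪ (⋃_{p ∈ 𝕆} p·𝒜⁻(M)); that is, m is cyclic if and only if m = pa for some p ∈ 𝕆 and some a ∈ 𝒜(M) ∪ 𝒜⁻(M). -/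
noncomputable section

open scoped Quaternion

namespace OctoAux

open Octo

set_option linter.unusedSimpArgs false

instance : FiniteDimensional ℝ Octo := inferInstanceAs (FiniteDimensional ℝ (ℍ[ℝ] × ℍ[ℝ]))

lemma octo_ext {x y : Octo} (h1 : p1 x = p1 y) (h2 : p2 x = p2 y) : x = y := Prod.ext h1 h2

@[simp] lemma p1_mk (a b : ℍ[ℝ]) : p1 (mk a b) = a := rfl
@[simp] lemma p2_mk (a b : ℍ[ℝ]) : p2 (mk a b) = b := rfl
@[simp] lemma p1_add (x y : Octo) : p1 (x + y) = p1 x + p1 y := rfl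
@[simp] lemma p2_add (x y : Octo) : p2 (x + y) = p2 x + p2 y := rfl
@[simp] lemma p1_sub (x y : Octo) : p1 (x - y) = p1 x - p1 y := rfl
@[simp] lemma p2_sub (x y : Octo) : p2 (x - y) = p2 x - p2 y := rfl
@[simp] lemma p1_smul (r : ℝ) (x : Octo) : p1 (r • x) = r • p1 x := rfl
@[simp] lemma p2_smul (r : ℝ) (x : Octo) : p2 (r • x) = r • p2 x := rfl
@[simp] lemma p1_zero : p1 (0 : Octo) = 0 := rfl
@[simp] lemma p2_zero : p2 (0 : Octo) = 0 := rfl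
@[simp] lemma p1_one : p1 (1 : Octo) = 1 := rfl
@[simp] lemma p2_one : p2 (1 : Octo) = 0 := rfl
@[simp] lemma p1_mul (x y : Octo) : p1 (x * y) = p1 x * p1 y - star (p2 y) * p2 x := rfl
@[simp] lemma p2_mul (x y : Octo) : p2 (x * y) = p2 y * p1 x + p2 x * star (p1 y) := rfl

/-- Squared norm. -/
def nsq (x : Octo) : ℝ :=
  (p1 x).re ^ 2 + (p1 x).imI ^ 2 + (p1 x).imJ ^ 2 + (p1 x).imK ^ 2 +
  (p2 x).re ^ 2 + (p2 x).imI ^ 2 + (p2 x).imJ ^ 2 + (p2 x).imK ^ 2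

lemma nsq_eq_zero {x : Octo} (hx : nsq x = 0) : x = 0 := by
  unfold nsq at hx
  have key : ∀ t : ℝ, t ^ 2 ≤ 0 → t = 0 := fun t ht => by
    have := sq_nonneg t
    exact pow_eq_zero_iff (two_ne_zero) |>.1 (le_antisymm ht this)
  apply octo_ext <;> ext <;> simp <;> apply key <;> nlinarith [sq_nonneg (p1 x).re,
    sq_nonneg (p1 x).imI, sq_nonneg (p1 x).imJ, sq_nonneg (p1 x).imK, sq_nonneg (p2 x).re,
    sq_nonneg (p2 x).imI, sq_nonneg (p2 x).imJ, sq_nonneg (p2 x).imK]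

lemma mul_self_eq (x : Octo) : x * x + nsq x • (1 : Octo) = (2 * (p1 x).re) • x := by
  apply octo_ext <;> ext <;> simp [nsq] <;> ring

/-- Quaternion with given coordinates. -/
def q4 (a b c d : ℝ) : ℍ[ℝ] := ⟨a, b, c, d⟩

@[simp] lemma q4_re (a b c d : ℝ) : (q4 a b c d).re = a := rfl
@[simp] lemma q4_imI (a b c d : ℝ) : (q4 a b c d).imI = b := rfl
@[simp] lemma q4_imJ (a b c d : ℝ) : (q4 a b c d).imJ = c := rfl
@[simp] lemma q4_imK (a b c d : ℝ) : (q4 a b c d).imK = d := rfl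

/-- Basis element. -/
def e1 : Octo := mk (q4 0 1 0 0) 0
/-- Basis element. -/
def e2 : Octo := mk (q4 0 0 1 0) 0
/-- Basis element. -/
def e3 : Octo := mk (q4 0 0 0 1) 0
/-- Basis element. -/
def e4 : Octo := mk 0 (q4 1 0 0 0)
/-- Basis element. -/
def e5 : Octo := mk 0 (q4 0 1 0 0)
/-- Basis element. -/
def e6 : Octo := mk 0 (q4 0 0 1 0)
/-- Basis element. -/
def e7 : Octo := mk 0 (q4 0 0 0 1)

lemma expand (x : Octo) : x = (p1 x).re • (1 : Octo) + (p1 x).imI • e1 + (p1 x).imJ • e2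
    + (p1 x).imK • e3 + (p2 x).re • e4 + (p2 x).imI • e5 + (p2 x).imJ • e6
    + (p2 x).imK • e7 := by
  apply octo_ext <;> ext <;> simp [e1, e2, e3, e4, e5, e6, e7]

variable {M : Type*} [AddCommGroup M] [Module ℝ M] {sm : Octo → M → M}

/-- Left multiplication as a linear map. -/
def L (h : IsOMod sm) (p : Octo) : M →ₗ[ℝ] M where
  toFun := sm p
  map_add' := h.smul_add p
  map_smul' r m := h.smul_real r p m

/-- Orbit map as a linear map. -/
def R (h : IsOMod sm) (m : M) : Octo →ₗ[ℝ] M where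
  toFun p := sm p m
  map_add' p q := h.add_smul p q m
  map_smul' r p := h.real_smul r p m

lemma sm_zero (h : IsOMod sm) (p : Octo) : sm p 0 = 0 := (L h p).map_zero

lemma sm_sq (h : IsOMod sm) (p : Octo) (m : M) : sm p (sm p m) = sm (p * p) m := by
  have := h.alt p p m
  have h2 : (2 : ℝ) • (sm (p * p) m - sm p (sm p m)) = 0 := by
    rw [two_smul]; nth_rewrite 1 [this]; simp
  have h3 := (smul_eq_zero.1 h2).resolve_left (by norm_num)
  exact (sub_eq_zero.1 h3).symm

lemma sm_eq_zero (h : IsOMod sm) {p : Octo} {m : M} (hp : sm p m = 0) (hm : m ≠ 0) : p = 0 := by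
  have h1 := sm_sq h p m
  rw [hp, sm_zero h] at h1
  have h2 := congrArg (fun x => sm x m) (mul_self_eq p)
  simp only [h.add_smul, h.real_smul, h.one_smul, hp, ← h1, smul_zero, zero_add] at h2
  exact nsq_eq_zero ((smul_eq_zero.1 h2).resolve_right hm)

lemma range_eq (h : IsOMod sm) {a m : M} (hm : m ≠ 0) (ha : a ≠ 0)
    (hle : ∀ p, ∃ q, sm p a = sm q m) : ∀ q, ∃ p, sm q m = sm p a := by
  have inj : ∀ x : M, x ≠ 0 → Function.Injective (R h x) := fun x hx => by
    rw [injective_iff_map_eq_zero]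
    exact fun p hp => sm_eq_zero h hp hx
  have hle' : LinearMap.range (R h a) ≤ LinearMap.range (R h m) := by
    rintro _ ⟨p, rfl⟩
    obtain ⟨q, hq⟩ := hle p
    exact ⟨q, hq.symm⟩
  have := Submodule.eq_of_le_of_finrank_eq hle' (by
    rw [LinearMap.finrank_range_of_inj (inj a ha), LinearMap.finrank_range_of_inj (inj m hm)])
  intro q
  have hq : R h m q ∈ LinearMap.range (R h a) := this ▸ ⟨q, rfl⟩
  obtain ⟨p, hp⟩ := hq
  exact ⟨p, hp.symm⟩

lemma cyclic_of (h : IsOMod sm) {m : M} (hc : ∀ p q, ∃ r, sm p (sm q m) = sm r m) :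
    IsOCyclic sm m := by
  apply Set.Subset.antisymm
  · apply Set.sInter_subset_of_mem
    refine ⟨⟨⟨0, ((R h m).map_zero).symm⟩, ?_, ?_, ?_⟩, ⟨1, (h.one_smul m).symm⟩⟩
    · rintro _ _ ⟨p, rfl⟩ ⟨q, rfl⟩
      exact ⟨p + q, (h.add_smul p q m).symm⟩
    · rintro r _ ⟨p, rfl⟩
      exact ⟨r • p, (h.real_smul r p m).symm⟩
    · rintro p _ ⟨q, rfl⟩
      exact hc p q
  · rintro _ ⟨p, rfl⟩ S ⟨hS, hmS⟩
    exact hS.osmul_mem p hmS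

lemma of_cyclic {m : M} (hc : IsOCyclic sm m) : ∀ p q, ∃ r, sm p (sm q m) = sm r m := by
  intro p q
  have h1 : sm q m ∈ genSet sm m := by rw [hc]; exact ⟨q, rfl⟩
  have h2 : sm p (sm q m) ∈ genSet sm m := fun S hS => hS.1.osmul_mem p (h1 S hS)
  rw [hc] at h2
  exact h2

lemma cyclic_of_mul (h : IsOMod sm) {a : M} (hc : ∀ p q, ∃ r, sm p (sm q a) = sm r a) (p : Octo) :
    IsOCyclic sm (sm p a) := by
  apply cyclic_of h
  by_cases hm : sm p a = 0
  · intro x y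
    exact ⟨0, by simp [hm, sm_zero h]⟩
  have ha : a ≠ 0 := by rintro rfl; exact hm (sm_zero h p)
  have key := range_eq h ha hm (fun q => hc q p)
  intro x y
  obtain ⟨r, hr⟩ := hc y p
  obtain ⟨t, ht⟩ := hc x r
  obtain ⟨u, hu⟩ := key t
  exact ⟨u, by rw [hr, ht, hu]⟩

/-- Clifford relations for seven linear maps. -/
structure Cliff (E1 E2 E3 E4 E5 E6 E7 : M →ₗ[ℝ] M) : Prop where
  s1 : ∀ x, E1 (E1 x) = -x
  s2 : ∀ x, E2 (E2 x) = -x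
  s3 : ∀ x, E3 (E3 x) = -x
  s4 : ∀ x, E4 (E4 x) = -x
  s5 : ∀ x, E5 (E5 x) = -x
  s6 : ∀ x, E6 (E6 x) = -x
  s7 : ∀ x, E7 (E7 x) = -x
  c21 : ∀ x, E2 (E1 x) = -E1 (E2 x)
  c41 : ∀ x, E4 (E1 x) = -E1 (E4 x)
  c42 : ∀ x, E4 (E2 x) = -E2 (E4 x)
  c31 : ∀ x, E3 (E1 x) = -E1 (E3 x)
  c32 : ∀ x, E3 (E2 x) = -E2 (E3 x)
  c34 : ∀ x, E3 (E4 x) = -E4 (E3 x)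
  c51 : ∀ x, E5 (E1 x) = -E1 (E5 x)
  c52 : ∀ x, E5 (E2 x) = -E2 (E5 x)
  c54 : ∀ x, E5 (E4 x) = -E4 (E5 x)
  c53 : ∀ x, E5 (E3 x) = -E3 (E5 x)
  c61 : ∀ x, E6 (E1 x) = -E1 (E6 x)
  c62 : ∀ x, E6 (E2 x) = -E2 (E6 x)
  c64 : ∀ x, E6 (E4 x) = -E4 (E6 x)
  c63 : ∀ x, E6 (E3 x) = -E3 (E6 x)
  c65 : ∀ x, E6 (E5 x) = -E5 (E6 x)
  c71 : ∀ x, E7 (E1 x) = -E1 (E7 x)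
  c72 : ∀ x, E7 (E2 x) = -E2 (E7 x)
  c74 : ∀ x, E7 (E4 x) = -E4 (E7 x)
  c73 : ∀ x, E7 (E3 x) = -E3 (E7 x)
  c75 : ∀ x, E7 (E5 x) = -E5 (E7 x)
  c76 : ∀ x, E7 (E6 x) = -E6 (E7 x)

lemma anti (h : IsOMod sm) {p q : Octo} (hpq : p * q + q * p = 0) (x : M) :
    L h p (L h q x) = -L h q (L h p x) := by
  have h1 := h.alt p q x
  have h2 : sm (p * q) x + sm (q * p) x = 0 := by
    rw [← h.add_smul, hpq]; exact (R h x).map_zero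
  change sm p (sm q x) = - sm q (sm p x)
  rw [neg_sub, sub_eq_iff_eq_add] at h1
  rw [h1] at h2
  rw [← sub_eq_zero, ← h2]
  abel

lemma sqneg (h : IsOMod sm) {p : Octo} (hp : p * p + (1 : ℝ) • (1 : Octo) = 0) (x : M) :
    L h p (L h p x) = -x := by
  change sm p (sm p x) = -x
  have := congrArg (fun y => sm y x) hp
  simp only [h.add_smul, h.real_smul, h.one_smul] at this
  have h0 : sm 0 x = 0 := (R h x).map_zero
  rw [h0] at this
  rw [sm_sq h, eq_neg_iff_add_eq_zero, ← this, _root_.one_smul]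

set_option maxHeartbeats 4000000 in
lemma cliff (h : IsOMod sm) :
    Cliff (L h e1) (L h e2) (L h e3) (L h e4) (L h e5) (L h e6) (L h e7) := by
  constructor <;> first
  | (apply sqneg; apply octo_ext <;> ext <;> simp [e1, e2, e3, e4, e5, e6, e7])
  | (apply anti; apply octo_ext <;> ext <;> simp [e1, e2, e3, e4, e5, e6, e7])

lemma L_expand (h : IsOMod sm) (p : Octo) (x : M) : sm p x =
    (p1 p).re • x + (p1 p).imI • L h e1 x + (p1 p).imJ • L h e2 x
    + (p1 p).imK • L h e3 x + (p2 p).re • L h e4 x + (p2 p).imI • L h e5 x + (p2 p).imJ • L h e6 x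
    + (p2 p).imK • L h e7 x := by
  conv_lhs => rw [expand p]
  simp only [h.add_smul, h.real_smul, h.one_smul]
  rfl

lemma is_assoc (h : IsOMod sm) {a : M}
    (h3 : L h e3 a = L h e1 (L h e2 a)) (h5 : L h e5 a = L h e1 (L h e4 a))
    (h6 : L h e6 a = L h e2 (L h e4 a)) (h7 : L h e7 a = -L h e1 (L h e2 (L h e4 a)))
    (p q : Octo) : sm (p * q) a = sm p (sm q a) := by
  obtain ⟨s1, s2, s3, s4, s5, s6, s7, c21, c41, c42, c31, c32, c34, c51, c52, c54, c53,
    c61, c62, c64, c63, c65, c71, c72, c74, c73, c75, c76⟩ := cliff h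
  simp only [L_expand h, map_add, map_smul, map_neg, h3, h5, h6, h7, c21, c41, c42, c31, c32, c34,
    c51, c52, c54, c61, c62, c64, c71, c72, c74, s1, s2, s4, neg_neg, smul_neg]
  simp only [p1_mul, p2_mul, Quaternion.re_sub, Quaternion.imI_sub, Quaternion.imJ_sub,
    Quaternion.imK_sub, Quaternion.re_add, Quaternion.imI_add, Quaternion.imJ_add,
    Quaternion.imK_add, Quaternion.re_mul, Quaternion.imI_mul, Quaternion.imJ_mul,
    Quaternion.imK_mul, Quaternion.re_star, Quaternion.imI_star, Quaternion.imJ_star,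
    Quaternion.imK_star]
  module

lemma is_conj (h : IsOMod sm) {a : M}
    (h3 : L h e3 a = -L h e1 (L h e2 a)) (h5 : L h e5 a = -L h e1 (L h e4 a))
    (h6 : L h e6 a = -L h e2 (L h e4 a)) (h7 : L h e7 a = -L h e1 (L h e2 (L h e4 a)))
    (p q : Octo) : sm (p * q) a = sm q (sm p a) := by
  obtain ⟨s1, s2, s3, s4, s5, s6, s7, c21, c41, c42, c31, c32, c34, c51, c52, c54, c53,
    c61, c62, c64, c63, c65, c71, c72, c74, c73, c75, c76⟩ := cliff h
  simp only [L_expand h, map_add, map_smul, map_neg, h3, h5, h6, h7, c21, c41, c42, c31, c32, c34,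
    c51, c52, c54, c61, c62, c64, c71, c72, c74, s1, s2, s4, neg_neg, smul_neg]
  simp only [p1_mul, p2_mul, Quaternion.re_sub, Quaternion.imI_sub, Quaternion.imJ_sub,
    Quaternion.imK_sub, Quaternion.re_add, Quaternion.imI_add, Quaternion.imJ_add,
    Quaternion.imK_add, Quaternion.re_mul, Quaternion.imI_mul, Quaternion.imJ_mul,
    Quaternion.imK_mul, Quaternion.re_star, Quaternion.imI_star, Quaternion.imJ_star,
    Quaternion.imK_star]
  module

lemma step (S : Submodule ℝ M) (T F : M →ₗ[ℝ] M) (hT : ∀ x, T (T x) = x)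
    (hF : ∀ x, F (F x) = -x) (hTF : ∀ x, T (F x) = -F (T x))
    (hTS : ∀ x ∈ S, T x ∈ S) (hFS : ∀ x ∈ S, F x ∈ S) (v : M) (hv : v ∈ S) (hv0 : v ≠ 0) (s : ℝ)
    (hs : s * s = 1) :
    ∃ w ∈ S, w ≠ 0 ∧ T w = s • w := by
  by_cases hc : v + s • T v = 0
  · refine ⟨F v, hFS v hv, ?_, ?_⟩
    · intro h0
      have := hF v
      rw [h0, map_zero] at this
      exact hv0 (neg_eq_zero.1 this.symm)
    · have h1 : s • v + T v = 0 := by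
        have := congrArg (s • ·) hc
        simpa [smul_smul, hs] using this
      rw [hTF, eq_neg_of_add_eq_zero_right h1]
      simp
  · exact ⟨v + s • T v, S.add_mem hv (S.smul_mem s (hTS v hv)), hc,
      by simp [hT, smul_smul, hs, add_comm]⟩

/-- Eigen-subspace cut out of S. -/
def cut (S : Submodule ℝ M) (T : M →ₗ[ℝ] M) (s : ℝ) : Submodule ℝ M :=
  S ⊓ LinearMap.ker (T - s • LinearMap.id)

lemma mem_cut {S : Submodule ℝ M} {T : M →ₗ[ℝ] M} {s : ℝ} {x : M} :
    x ∈ cut S T s ↔ x ∈ S ∧ T x = s • x := by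
  simp [cut, sub_eq_zero]

lemma cut_stable {S : Submodule ℝ M} {T F : M →ₗ[ℝ] M} {s : ℝ}
    (hF : ∀ x ∈ S, F x ∈ S) (hc : ∀ x, T (F x) = F (T x)) : ∀ x ∈ cut S T s, F x ∈ cut S T s := by
  intro x hx
  rw [mem_cut] at hx ⊢
  exact ⟨hF x hx.1, by rw [hc, hx.2, map_smul]⟩

lemma find {E1 E2 E3 E4 E5 E6 E7 : M →ₗ[ℝ] M} (hC : Cliff E1 E2 E3 E4 E5 E6 E7)
    (S : Submodule ℝ M) (k1 : ∀ x ∈ S, E1 x ∈ S) (k2 : ∀ x ∈ S, E2 x ∈ S)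
    (k3 : ∀ x ∈ S, E3 x ∈ S) (k4 : ∀ x ∈ S, E4 x ∈ S) (k5 : ∀ x ∈ S, E5 x ∈ S)
    (k6 : ∀ x ∈ S, E6 x ∈ S) (k7 : ∀ x ∈ S, E7 x ∈ S) (m : M) (hm : m ∈ S) (hm0 : m ≠ 0) :
    ∃ a ∈ S, a ≠ 0 ∧ ((E3 a = E1 (E2 a) ∧ E5 a = E1 (E4 a) ∧ E6 a = E2 (E4 a) ∧
        E7 a = -E1 (E2 (E4 a))) ∨ (E3 a = -E1 (E2 a) ∧ E5 a = -E1 (E4 a) ∧ E6 a = -E2 (E4 a) ∧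
        E7 a = -E1 (E2 (E4 a)))) := by
  obtain ⟨s1, s2, s3, s4, s5, s6, s7, c21, c41, c42, c31, c32, c34, c51, c52, c54, c53,
    c61, c62, c64, c63, c65, c71, c72, c74, c73, c75, c76⟩ := hC
  let W := E1 ∘ₗ E2 ∘ₗ E3 ∘ₗ E4 ∘ₗ E5 ∘ₗ E6 ∘ₗ E7
  have hW : ∀ x, W x = E1 (E2 (E3 (E4 (E5 (E6 (E7 x)))))) := fun x => rfl
  have hWS : ∀ x ∈ S, W x ∈ S := fun x hx => k1 _ (k2 _ (k3 _ (k4 _ (k5 _ (k6 _ (k7 _ hx))))))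
  have hWW : ∀ x, W (W x) = x := fun x => by
    simp only [hW, map_neg, neg_neg, s1, s2, s3, s4, s5, s6, s7, c21, c41, c42, c31, c32, c34,
      c51, c52, c54, c53, c61, c62, c64, c63, c65, c71, c72, c74, c73, c75, c76]
  let T1 := E1 ∘ₗ E2 ∘ₗ E3
  let T2 := E1 ∘ₗ E4 ∘ₗ E5
  let T3 := E2 ∘ₗ E4 ∘ₗ E6
  have hT1 : ∀ x, T1 x = E1 (E2 (E3 x)) := fun x => rfl
  have hT2 : ∀ x, T2 x = E1 (E4 (E5 x)) := fun x => rfl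
  have hT3 : ∀ x, T3 x = E2 (E4 (E6 x)) := fun x => rfl
  obtain ⟨v, hv, hv0, s, hs, hWv⟩ : ∃ v ∈ S, v ≠ 0 ∧ ∃ s : ℝ, (s = 1 ∨ s = -1) ∧
      W v = (-s) • v := by
    by_cases hc : m + W m = 0
    · exact ⟨m, hm, hm0, 1, Or.inl rfl, by
        rw [eq_neg_of_add_eq_zero_right hc]; simp⟩
    · exact ⟨m + W m, S.add_mem hm (hWS m hm), hc, -1, Or.inr rfl, by
        simp [hWW, add_comm]⟩
  have hss : (-s) * (-s) = 1 := by rcases hs with rfl | rfl <;> norm_num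
  let S0 := cut S W (-s)
  have st0 : ∀ F : M →ₗ[ℝ] M, (∀ x ∈ S, F x ∈ S) → (∀ x, W (F x) = F (W x)) →
      ∀ x ∈ S0, F x ∈ S0 := fun F h1 h2 => cut_stable h1 h2
  have q1 : ∀ x ∈ S0, E1 x ∈ S0 := st0 E1 k1 fun x => by
    simp only [hW, map_neg, neg_neg, s1, s2, s3, s4, s5, s6, s7, c21, c41, c42, c31, c32, c34,
      c51, c52, c54, c53, c61, c62, c64, c63, c65, c71, c72, c74, c73, c75, c76]
  have q2 : ∀ x ∈ S0, E2 x ∈ S0 := st0 E2 k2 fun x => by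
    simp only [hW, map_neg, neg_neg, s1, s2, s3, s4, s5, s6, s7, c21, c41, c42, c31, c32, c34,
      c51, c52, c54, c53, c61, c62, c64, c63, c65, c71, c72, c74, c73, c75, c76]
  have q3 : ∀ x ∈ S0, E3 x ∈ S0 := st0 E3 k3 fun x => by
    simp only [hW, map_neg, neg_neg, s1, s2, s3, s4, s5, s6, s7, c21, c41, c42, c31, c32, c34,
      c51, c52, c54, c53, c61, c62, c64, c63, c65, c71, c72, c74, c73, c75, c76]
  have q4 : ∀ x ∈ S0, E4 x ∈ S0 := st0 E4 k4 fun x => by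
    simp only [hW, map_neg, neg_neg, s1, s2, s3, s4, s5, s6, s7, c21, c41, c42, c31, c32, c34,
      c51, c52, c54, c53, c61, c62, c64, c63, c65, c71, c72, c74, c73, c75, c76]
  have q5 : ∀ x ∈ S0, E5 x ∈ S0 := st0 E5 k5 fun x => by
    simp only [hW, map_neg, neg_neg, s1, s2, s3, s4, s5, s6, s7, c21, c41, c42, c31, c32, c34,
      c51, c52, c54, c53, c61, c62, c64, c63, c65, c71, c72, c74, c73, c75, c76]
  have q6 : ∀ x ∈ S0, E6 x ∈ S0 := st0 E6 k6 fun x => by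
    simp only [hW, map_neg, neg_neg, s1, s2, s3, s4, s5, s6, s7, c21, c41, c42, c31, c32, c34,
      c51, c52, c54, c53, c61, c62, c64, c63, c65, c71, c72, c74, c73, c75, c76]
  have r1 : ∀ x ∈ S0, T1 x ∈ S0 := fun x hx => q1 _ (q2 _ (q3 _ hx))
  have r2 : ∀ x ∈ S0, T2 x ∈ S0 := fun x hx => q1 _ (q4 _ (q5 _ hx))
  have r3 : ∀ x ∈ S0, T3 x ∈ S0 := fun x hx => q2 _ (q4 _ (q6 _ hx))
  obtain ⟨v1, hv1, hv10, hTv1⟩ := step S0 T1 E4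
    (fun x => by simp only [hT1, map_neg, neg_neg, s1, s2, s3, c21, c31, c32])
    s4 (fun x => by simp only [hT1, map_neg, neg_neg, c41, c42, c34])
    r1 q4 v (mem_cut.2 ⟨hv, hWv⟩) hv0 (-s) hss
  let S1 := cut S0 T1 (-s)
  have st1 : ∀ F : M →ₗ[ℝ] M, (∀ x ∈ S0, F x ∈ S0) → (∀ x, T1 (F x) = F (T1 x)) →
      ∀ x ∈ S1, F x ∈ S1 := fun F h1 h2 => cut_stable h1 h2
  obtain ⟨v2, hv2, hv20, hTv2⟩ := step S1 T2 E2
    (fun x => by simp only [hT2, map_neg, neg_neg, s1, s4, s5, c41, c51, c54])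
    s2 (fun x => by simp only [hT2, map_neg, neg_neg, c21, c42, c52])
    (st1 T2 r2 fun x => by
      simp only [hT1, hT2, map_neg, neg_neg, s1, s2, s3, s4, s5, c21, c41, c42, c31, c32, c34,
        c51, c52, c54, c53])
    (st1 E2 q2 fun x => by simp only [hT1, map_neg, neg_neg, c21, c32])
    v1 (mem_cut.2 ⟨hv1, hTv1⟩) hv10 (-s) hss
  let S2 := cut S1 T2 (-s)
  have st2 : ∀ F : M →ₗ[ℝ] M, (∀ x ∈ S1, F x ∈ S1) → (∀ x, T2 (F x) = F (T2 x)) →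
      ∀ x ∈ S2, F x ∈ S2 := fun F h1 h2 => cut_stable h1 h2
  obtain ⟨a, ha, ha0, hTa3⟩ := step S2 T3 E1
    (fun x => by simp only [hT3, map_neg, neg_neg, s2, s4, s6, c42, c62, c64])
    s1 (fun x => by simp only [hT3, map_neg, neg_neg, c21, c41, c61])
    (st2 T3 (st1 T3 r3 fun x => by
      simp only [hT1, hT3, map_neg, neg_neg, s1, s2, s3, s4, s6, c21, c41, c42, c31, c32, c34,
        c61, c62, c64, c63]) fun x => by
      simp only [hT2, hT3, map_neg, neg_neg, s1, s2, s5, s4, s6, c21, c41, c42, c51, c52, c54,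
        c61, c62, c64, c65])
    (st2 E1 (st1 E1 q1 fun x => by simp only [hT1, map_neg, neg_neg, c21, c31]) fun x => by
      simp only [hT2, map_neg, neg_neg, c41, c51])
    v2 (mem_cut.2 ⟨hv2, hTv2⟩) hv20 (-s) hss
  obtain ⟨ha', hTa2⟩ := mem_cut.1 ha
  obtain ⟨ha'', hTa1⟩ := mem_cut.1 ha'
  obtain ⟨haS, hWa⟩ := mem_cut.1 ha''
  rw [hT1] at hTa1
  rw [hT2] at hTa2
  rw [hT3] at hTa3
  rw [hW] at hWa
  have g1 := congrArg (fun x => E2 (E1 x)) hTa1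
  have g2 := congrArg (fun x => E4 (E1 x)) hTa2
  have g3 := congrArg (fun x => E4 (E2 x)) hTa3
  have g4 := congrArg (fun x => E6 (E5 (E4 (E3 (E2 (E1 x)))))) hWa
  refine ⟨a, haS, ha0, ?_⟩
  rcases hs with rfl | rfl
  · left
    simp only [s1, s2, s3, s4, s5, s6, map_neg, neg_neg, map_smul, neg_smul, one_smul, c21, c41,
      c42] at g1 g2 g3 g4
    refine ⟨g1, g2, g3, ?_⟩
    simp only [c31, c32, c34, c51, c52, c54, c61, c62, c64, c21, c41, c42, g1, g2, g3, s1, s2, s4,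
      map_neg, neg_neg] at g4
    first | exact g4 | exact neg_injective (by simpa using g4)
  · right
    simp only [s1, s2, s3, s4, s5, s6, map_neg, neg_neg, map_smul, neg_smul, one_smul, c21, c41,
      c42] at g1 g2 g3 g4
    refine ⟨g1, g2, g3, ?_⟩
    simp only [c31, c32, c34, c51, c52, c54, c61, c62, c64, c21, c41, c42, g1, g2, g3, s1, s2, s4,
      map_neg, neg_neg] at g4
    first | exact g4 | exact neg_injective (by simpa using g4)

end OctoAux

/-- `𝒞(M) = (⋃_{p ∈ 𝕆} p·𝒜(M)) ∪ (⋃_{p ∈ 𝕆} p·𝒜⁻(M))`. -/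
theorem stmt2 {M : Type*} [AddCommGroup M] [Module ℝ M]
    (sm : Octo → M → M) (h : IsOMod sm) :
    {m : M | IsOCyclic sm m} =
      (⋃ p : Octo, (sm p) '' assocSet sm) ∪ (⋃ p : Octo, (sm p) '' conjAssocSet sm) := by
  ext m
  simp only [Set.mem_setOf_eq, Set.mem_union, Set.mem_iUnion, Set.mem_image]
  constructor
  · intro hc
    have hcl := OctoAux.of_cyclic hc
    by_cases hm : m = 0
    · left
      refine ⟨0, 0, ?_, by rw [hm, OctoAux.sm_zero h]⟩
      intro p q
      simp [oLassoc, OctoAux.sm_zero h]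
    have stab : ∀ p : Octo, ∀ x ∈ LinearMap.range (OctoAux.R h m),
        OctoAux.L h p x ∈ LinearMap.range (OctoAux.R h m) := by
      rintro p _ ⟨q, rfl⟩
      obtain ⟨r, hr⟩ := hcl p q
      exact ⟨r, hr.symm⟩
    obtain ⟨a, ⟨q, hq⟩, ha0, hcase⟩ := OctoAux.find (OctoAux.cliff h)
      (LinearMap.range (OctoAux.R h m)) (stab _) (stab _) (stab _) (stab _) (stab _) (stab _)
      (stab _) m ⟨1, h.one_smul m⟩ hm
    replace hq : sm q m = a := hq
    have key := OctoAux.range_eq h hm ha0 (fun p => hq ▸ hcl p q)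
    obtain ⟨p, hp⟩ := key 1
    rw [h.one_smul] at hp
    rcases hcase with ⟨h3, h5, h6, h7⟩ | ⟨h3, h5, h6, h7⟩
    · left
      exact ⟨p, a, fun x y => sub_eq_zero.2 (OctoAux.is_assoc h h3 h5 h6 h7 x y), hp.symm⟩
    · right
      exact ⟨p, a, OctoAux.is_conj h h3 h5 h6 h7, hp.symm⟩
  · rintro (⟨p, a, ha, rfl⟩ | ⟨p, a, ha, rfl⟩)
    · exact OctoAux.cyclic_of_mul h (fun x y => ⟨x * y, (sub_eq_zero.1 (ha x y)).symm⟩) p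
    · exact OctoAux.cyclic_of_mul h (fun x y => ⟨y * x, (ha y x).symm⟩) p
end
end
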